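/- arXiv:2508.05147 — 2 statements merged into one kernel-verified Lean document; each statement's English description precedes it below -/
import Mathlib

section
/- Let β ≥ 1, R > 0, and let (c_k)_{k∈ℤ^d} be complex numbers with ∑_{k∈ℤ^d} e^{βR|k|_β}|c_k| < ∞. Then the function f(σ) := ∑_{k∈ℤ^d} c_k e^{i k·σ} is a smooth (2π)ℤ^d-periodic function and ‖f‖_{β,R} ≤ ∑_{k∈ℤ^d} e^{βR|k|_β}|c_k|, i.e. the Gevrey norm is bounded by the weighted Fourier norm: ‖f‖_{β,R} ≤ ‖f‖_{𝓕_{β,R}}. -/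
open scoped BigOperators

/-- For `k ∈ ℤ^d` and `β ≥ 1`, the quantity `|k|_β := ∑ i, |k_i|^(1/β)`. -/
noncomputable def znormBeta {d : ℕ} (β : ℝ) (k : Fin d → ℤ) : ℝ :=
  ∑ i, |(k i : ℝ)| ^ (1 / β)

/-- The partial derivative `∂_i f` of a function `f : ℝ^d → ℂ`. -/
noncomputable def gevPDerivC {d : ℕ} (i : Fin d) (f : (Fin d → ℝ) → ℂ) :
    (Fin d → ℝ) → ℂ :=
  fun x => fderiv ℝ f x (Pi.single i 1)

/-- The multi-index partial derivative `∂^k f = ∂_1^{k_1} ⋯ ∂_d^{k_d} f`. -/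
noncomputable def gevMDerivC {d : ℕ} (k : Fin d → ℕ) (f : (Fin d → ℝ) → ℂ) :
    (Fin d → ℝ) → ℂ :=
  (List.finRange d).foldr (fun i g => (gevPDerivC i)^[k i] g) f

/-- The sup-norm `‖f‖_{C⁰} = sup_x ‖f x‖`. -/
noncomputable def supNormC {d : ℕ} (f : (Fin d → ℝ) → ℂ) : ℝ := ⨆ x, ‖f x‖

/-- The `k`-th term `(R^{β|k|₁}/(k!)^β)‖∂^k f‖_{C⁰}` of the Gevrey norm. -/
noncomputable def gevreyTermC {d : ℕ} (β R : ℝ) (f : (Fin d → ℝ) → ℂ)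
    (k : Fin d → ℕ) : ℝ :=
  R ^ (β * ∑ i, (k i : ℝ)) / (∏ i, ((k i).factorial : ℝ)) ^ β * supNormC (gevMDerivC k f)

/-- The Gevrey norm `‖f‖_{β,R} = ∑_{k∈ℕ^d} (R^{β|k|₁}/(k!)^β)‖∂^k f‖_{C⁰}`. -/
noncomputable def gevreyNormC {d : ℕ} (β R : ℝ) (f : (Fin d → ℝ) → ℂ) : ℝ :=
  ∑' k : Fin d → ℕ, gevreyTermC β R f k

/-- Factor attached to a Fourier mode and a multi-index. -/
noncomputable def gevA {d : ℕ} (β R : ℝ) (k : Fin d → ℤ) (n : Fin d → ℕ) : ℝ :=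
  ∏ i, (R * |(k i : ℝ)| ^ (1 / β)) ^ (n i) / ((n i).factorial : ℝ)

theorem gevA_nonneg {d : ℕ} {β R : ℝ} (hR : 0 < R) (k : Fin d → ℤ) (n : Fin d → ℕ) :
    0 ≤ gevA β R k n := by
  unfold gevA
  positivity

theorem gevA_sum_le {d : ℕ} {β R : ℝ} (hR : 0 < R) (k : Fin d → ℤ)
    (s : Finset (Fin d → ℕ)) :
    ∑ n ∈ s, gevA β R k n ≤ Real.exp (R * znormBeta β k) := by
  classical
  obtain ⟨N, hN⟩ : ∃ N : ℕ, ∀ n ∈ s, ∀ i, n i < N := by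
    refine ⟨s.sup (fun n => Finset.univ.sup n) + 1, fun n hn i => ?_⟩
    have h1 : n i ≤ Finset.univ.sup n := Finset.le_sup (Finset.mem_univ i)
    have h2 : Finset.univ.sup n ≤ s.sup (fun n => Finset.univ.sup n) :=
      Finset.le_sup (f := fun n : Fin d → ℕ => Finset.univ.sup n) hn
    omega
  have hsub : s ⊆ Fintype.piFinset (fun _ : Fin d => Finset.range N) := by
    intro n hn
    rw [Fintype.mem_piFinset]
    intro i
    exact Finset.mem_range.2 (hN n hn i)
  calc ∑ n ∈ s, gevA β R k n
      ≤ ∑ n ∈ Fintype.piFinset (fun _ : Fin d => Finset.range N), gevA β R k n :=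
        Finset.sum_le_sum_of_subset_of_nonneg hsub (fun n _ _ => gevA_nonneg hR k n)
    _ = ∏ i, ∑ m ∈ Finset.range N,
          (R * |(k i : ℝ)| ^ (1 / β)) ^ m / (m.factorial : ℝ) := by
        rw [Finset.prod_univ_sum]
        rfl
    _ ≤ ∏ i, Real.exp (R * |(k i : ℝ)| ^ (1 / β)) := by
        refine Finset.prod_le_prod (fun i _ => by positivity) (fun i _ => ?_)
        exact Real.sum_le_exp_of_nonneg (by positivity) N
    _ = Real.exp (R * znormBeta β k) := by
        rw [← Real.exp_sum, znormBeta, Finset.mul_sum]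

theorem gevA_rpow {d : ℕ} {β R : ℝ} (hβ : 1 ≤ β) (hR : 0 < R) (k : Fin d → ℤ)
    (n : Fin d → ℕ) :
    gevA β R k n ^ β = R ^ (β * ∑ i, (n i : ℝ)) / (∏ i, ((n i).factorial : ℝ)) ^ β *
      ∏ i, |(k i : ℝ)| ^ (n i) := by
  have hb : β ≠ 0 := by linarith
  have h1 : gevA β R k n = R ^ (∑ i, (n i : ℝ)) / (∏ i, ((n i).factorial : ℝ)) *
      ∏ i, (|(k i : ℝ)| ^ (1 / β)) ^ (n i) := by
    unfold gevA
    rw [Finset.prod_div_distrib]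
    simp_rw [mul_pow]
    rw [Finset.prod_mul_distrib, Finset.prod_pow_eq_pow_sum, ← Nat.cast_sum,
      Real.rpow_natCast]
    ring
  rw [h1, Real.mul_rpow (by positivity) (by positivity),
    Real.div_rpow (by positivity) (by positivity), ← Real.rpow_mul hR.le,
    mul_comm (∑ i, (n i : ℝ)) β]
  congr 1
  rw [← Real.finsetProd_rpow _ _ (fun i _ => by positivity)]
  refine Finset.prod_congr rfl (fun i _ => ?_)
  rw [← Real.rpow_natCast, ← Real.rpow_mul (by positivity), ← Real.rpow_mul (by positivity),
    ← Real.rpow_natCast]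
  congr 1
  field_simp

theorem gevA_rpow_sum_le {d : ℕ} {β R : ℝ} (hβ : 1 ≤ β) (hR : 0 < R) (k : Fin d → ℤ)
    (s : Finset (Fin d → ℕ)) :
    ∑ n ∈ s, gevA β R k n ^ β ≤ Real.exp (β * R * znormBeta β k) := by
  set S := Real.exp (R * znormBeta β k) with hS
  have hS0 : 0 < S := Real.exp_pos _
  have hle : ∀ n, gevA β R k n ≤ S := fun n => by
    simpa using gevA_sum_le (β := β) hR k {n}
  have split : ∀ x : ℝ, 0 ≤ x → x ^ β = x * x ^ (β - 1) := fun x hx => by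
    rcases hx.eq_or_lt with rfl | hx
    · rw [Real.zero_rpow (by linarith), zero_mul]
    · rw [Real.rpow_sub_one hx.ne']
      field_simp
  calc ∑ n ∈ s, gevA β R k n ^ β ≤ ∑ n ∈ s, gevA β R k n * S ^ (β - 1) := by
        refine Finset.sum_le_sum (fun n _ => ?_)
        rw [split _ (gevA_nonneg hR k n)]
        exact mul_le_mul_of_nonneg_left
          (Real.rpow_le_rpow (gevA_nonneg hR k n) (hle n) (by linarith)) (gevA_nonneg hR k n)
    _ = (∑ n ∈ s, gevA β R k n) * S ^ (β - 1) := by rw [Finset.sum_mul]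
    _ ≤ S * S ^ (β - 1) :=
        mul_le_mul_of_nonneg_right (gevA_sum_le hR k s) (by positivity)
    _ = S ^ β := (split S hS0.le).symm
    _ = Real.exp (β * R * znormBeta β k) := by
        rw [hS, ← Real.exp_mul]
        congr 1
        ring

/-- Rapid decay of coefficients. -/
def gevRapid {d : ℕ} (c : (Fin d → ℤ) → ℂ) : Prop :=
  ∀ n : Fin d → ℕ, Summable fun k => ‖c k‖ * ∏ i, |(k i : ℝ)| ^ (n i)

/-- The Fourier series. -/
noncomputable def gevF {d : ℕ} (c : (Fin d → ℤ) → ℂ) (σ : Fin d → ℝ) : ℂ :=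
  ∑' k : Fin d → ℤ, c k * Complex.exp (Complex.I * ((∑ i, (k i : ℝ) * σ i : ℝ) : ℂ))

theorem gevRapid.summable {d : ℕ} {c : (Fin d → ℤ) → ℂ} (h : gevRapid c) :
    Summable fun k => ‖c k‖ := by
  simpa using h 0

theorem gevRapid.mul {d : ℕ} {c : (Fin d → ℤ) → ℂ} (h : gevRapid c) (j : Fin d) :
    gevRapid (fun k => (Complex.I * ((k j : ℝ) : ℂ)) * c k) := by
  intro n
  refine (h (n + Pi.single j 1)).congr (fun k => ?_)
  have : ∏ i, |(k i : ℝ)| ^ ((n + Pi.single j 1 : Fin d → ℕ) i)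
      = (∏ i, |(k i : ℝ)| ^ (n i)) * |(k j : ℝ)| := by
    simp only [Pi.add_apply, pow_add, Finset.prod_mul_distrib]
    congr 1
    rw [Finset.prod_eq_single j]
    · simp
    · intro b _ hb
      simp [hb]
    · simp
  rw [this, norm_mul, norm_mul, Complex.norm_I, Complex.norm_real, Real.norm_eq_abs]
  ring

theorem gevExp_norm (x : ℝ) : ‖Complex.exp (Complex.I * (x : ℂ))‖ = 1 := by
  rw [mul_comm]
  exact Complex.norm_exp_ofReal_mul_I x

theorem gevTerm_summable {d : ℕ} {c : (Fin d → ℤ) → ℂ} (h : Summable fun k => ‖c k‖)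
    (σ : Fin d → ℝ) :
    Summable fun k : Fin d → ℤ =>
      c k * Complex.exp (Complex.I * ((∑ i, (k i : ℝ) * σ i : ℝ) : ℂ)) := by
  refine Summable.of_norm (h.congr (fun k => ?_))
  rw [norm_mul, gevExp_norm, mul_one]

/-- The complexified coordinate. -/
noncomputable def gevD {d : ℕ} (j : Fin d) : (Fin d → ℝ) →L[ℝ] ℂ :=
  Complex.ofRealCLM.comp (ContinuousLinearMap.proj j)

theorem gevD_norm {d : ℕ} (j : Fin d) : ‖gevD j‖ ≤ 1 := by
  refine ContinuousLinearMap.opNorm_le_bound _ zero_le_one (fun x => ?_)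
  simpa [gevD] using norm_le_pi_norm x j

theorem gevTerm_hasFDerivAt {d : ℕ} (a : ℂ) (k : Fin d → ℤ) (x : Fin d → ℝ) :
    HasFDerivAt (fun σ : Fin d → ℝ =>
        a * Complex.exp (Complex.I * ((∑ i, (k i : ℝ) * σ i : ℝ) : ℂ)))
      (∑ j, (((Complex.I * ((k j : ℝ) : ℂ)) * a) *
        Complex.exp (Complex.I * ((∑ i, (k i : ℝ) * x i : ℝ) : ℂ))) • gevD j) x := by
  have h1 : HasFDerivAt (fun σ : Fin d → ℝ => ((∑ i, (k i : ℝ) * σ i : ℝ) : ℂ))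
      (∑ j, ((k j : ℝ) : ℂ) • gevD j) x := by
    have : (fun σ : Fin d → ℝ => ((∑ i, (k i : ℝ) * σ i : ℝ) : ℂ))
        = (∑ j, ((k j : ℝ) : ℂ) • gevD j : (Fin d → ℝ) →L[ℝ] ℂ) := by
      funext σ
      simp [gevD]
    rw [this]
    exact ContinuousLinearMap.hasFDerivAt _
  have h2 := ((h1.const_mul Complex.I).cexp).const_mul a
  refine h2.congr_fderiv ?_
  rw [Finset.smul_sum, Finset.smul_sum, Finset.smul_sum]
  refine Finset.sum_congr rfl (fun j _ => ?_)
  rw [smul_smul, smul_smul, smul_smul]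
  congr 1
  ring

theorem gevF_hasFDerivAt {d : ℕ} {c : (Fin d → ℤ) → ℂ} (h : gevRapid c) (x : Fin d → ℝ) :
    HasFDerivAt (gevF c)
      (∑ j, gevF (fun k => (Complex.I * ((k j : ℝ) : ℂ)) * c k) x • gevD j) x := by
  have hu : Summable fun k : Fin d → ℤ => ∑ j, ‖(Complex.I * ((k j : ℝ) : ℂ)) * c k‖ :=
    summable_sum (fun j _ => (h.mul j).summable)
  have key := hasFDerivAt_tsum (𝕜 := ℝ) hu
    (fun (k : Fin d → ℤ) y => gevTerm_hasFDerivAt (c k) k y)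
    (fun k y => by
      refine (norm_sum_le _ _).trans (Finset.sum_le_sum (fun j _ => ?_))
      rw [norm_smul, norm_mul _ (Complex.exp _), gevExp_norm, mul_one]
      exact mul_le_of_le_one_right (norm_nonneg _) (gevD_norm j))
    (gevTerm_summable h.summable x) x
  refine key.congr_fderiv ?_
  refine HasSum.tsum_eq (hasSum_sum (fun j _ => ?_))
  exact (gevTerm_summable (h.mul j).summable x).hasSum.smul_const (gevD j)

theorem gevF_contDiff_nat {d : ℕ} (m : ℕ) : ∀ {c : (Fin d → ℤ) → ℂ}, gevRapid c →
    ContDiff ℝ m (gevF c) := by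
  induction m with
  | zero =>
    intro c h
    exact contDiff_zero.2 (continuous_iff_continuousAt.2
      (fun x => (gevF_hasFDerivAt h x).continuousAt))
  | succ m ih =>
    intro c h
    refine contDiff_succ_iff_hasFDerivAt.2 ⟨_, ?_, fun x => gevF_hasFDerivAt h x⟩
    exact ContDiff.sum (fun j _ => (ih (h.mul j)).smul contDiff_const)

theorem gevPDerivC_gevF {d : ℕ} {c : (Fin d → ℤ) → ℂ} (h : gevRapid c) (j : Fin d) :
    gevPDerivC j (gevF c) = gevF (fun k => (Complex.I * ((k j : ℝ) : ℂ)) * c k) := by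
  funext x
  unfold gevPDerivC
  rw [(gevF_hasFDerivAt h x).fderiv, ContinuousLinearMap.sum_apply, Finset.sum_eq_single j]
  · simp [gevD]
  · intro b _ hb
    simp [gevD, hb]
  · simp

theorem gevPDerivC_iter {d : ℕ} (j : Fin d) (m : ℕ) {c : (Fin d → ℤ) → ℂ} (h : gevRapid c) :
    gevRapid (fun k => (Complex.I * ((k j : ℝ) : ℂ)) ^ m * c k) ∧
    (gevPDerivC j)^[m] (gevF c) = gevF (fun k => (Complex.I * ((k j : ℝ) : ℂ)) ^ m * c k) := by
  induction m with
  | zero => simpa using h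
  | succ m ih =>
    have e : (fun k : Fin d → ℤ => (Complex.I * ((k j : ℝ) : ℂ)) ^ (m + 1) * c k)
        = fun k => (Complex.I * ((k j : ℝ) : ℂ)) *
          ((Complex.I * ((k j : ℝ) : ℂ)) ^ m * c k) := by
      funext k
      ring
    rw [e]
    refine ⟨ih.1.mul j, ?_⟩
    rw [Function.iterate_succ_apply', ih.2, gevPDerivC_gevF ih.1]

theorem gevFold {d : ℕ} (n : Fin d → ℕ) {c : (Fin d → ℤ) → ℂ} (h : gevRapid c)
    (l : List (Fin d)) :
    gevRapid (fun k => (l.map (fun j => (Complex.I * ((k j : ℝ) : ℂ)) ^ n j)).prod * c k) ∧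
    l.foldr (fun i g => (gevPDerivC i)^[n i] g) (gevF c) =
      gevF (fun k => (l.map (fun j => (Complex.I * ((k j : ℝ) : ℂ)) ^ n j)).prod * c k) := by
  induction l with
  | nil => simpa using h
  | cons j l ih =>
    have := gevPDerivC_iter j (n j) ih.1
    simp only [List.map_cons, List.prod_cons, List.foldr_cons, mul_assoc] at this ih ⊢
    rw [ih.2]
    exact this

theorem gevMDerivC_gevF_norm {d : ℕ} (n : Fin d → ℕ) {c : (Fin d → ℤ) → ℂ} (h : gevRapid c) :
    supNormC (gevMDerivC n (gevF c)) ≤ ∑' k, ‖c k‖ * ∏ i, |(k i : ℝ)| ^ (n i) := by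
  unfold supNormC gevMDerivC
  refine ciSup_le (fun x => ?_)
  rw [(gevFold n h _).2]
  refine tsum_of_norm_bounded (h n).hasSum (fun k => le_of_eq ?_)
  rw [norm_mul, gevExp_norm, mul_one, norm_mul, ← Fin.prod_univ_def, norm_prod, mul_comm]
  simp

theorem gevF_periodic {d : ℕ} (c : (Fin d → ℤ) → ℂ) (x : Fin d → ℝ) (m : Fin d → ℤ) :
    gevF c (fun i => x i + 2 * Real.pi * m i) = gevF c x := by
  unfold gevF
  refine tsum_congr (fun k => ?_)
  congr 1
  rw [Complex.exp_eq_exp_iff_exists_int]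
  refine ⟨∑ i, k i * m i, ?_⟩
  push_cast
  simp only [mul_add, Finset.sum_add_distrib, Finset.sum_mul, Finset.mul_sum]
  congr 1
  refine Finset.sum_congr rfl (fun i _ => ?_)
  ring

theorem gevRapid_of_summable {d : ℕ} {β R : ℝ} (hβ : 1 ≤ β) (hR : 0 < R)
    {c : (Fin d → ℤ) → ℂ}
    (hc : Summable fun k => Real.exp (β * R * znormBeta β k) * ‖c k‖) : gevRapid c := by
  intro n
  set w := R ^ (β * ∑ i, (n i : ℝ)) / (∏ i, ((n i).factorial : ℝ)) ^ β with hw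
  have hw0 : 0 < w := by positivity
  refine Summable.of_nonneg_of_le (fun k => by positivity) (fun k => ?_) (hc.mul_left w⁻¹)
  have h1 := gevA_rpow_sum_le hβ hR k {n}
  rw [Finset.sum_singleton, gevA_rpow hβ hR, ← hw] at h1
  rw [← mul_assoc, mul_comm]
  refine mul_le_mul_of_nonneg_right ?_ (norm_nonneg _)
  rwa [inv_mul_eq_div, le_div_iff₀ hw0, mul_comm]

/-- A function with weighted-summable Fourier coefficients is smooth, periodic,
and its Gevrey norm is bounded by the weighted Fourier norm:
`‖f‖_{β,R} ≤ ‖f‖_{𝓕_{β,R}}`. -/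
theorem gevrey_norm_le_fourier_norm (d : ℕ) (hd : 1 ≤ d) (β R : ℝ)
    (hβ : 1 ≤ β) (hR : 0 < R) (c : (Fin d → ℤ) → ℂ)
    (hc : Summable fun k => Real.exp (β * R * znormBeta β k) * ‖c k‖)
    (f : (Fin d → ℝ) → ℂ)
    (hf : ∀ σ : Fin d → ℝ, f σ = ∑' k : Fin d → ℤ,
      c k * Complex.exp (Complex.I * ((∑ i, (k i : ℝ) * σ i : ℝ) : ℂ))) :
    ContDiff ℝ (⊤ : ℕ∞) f ∧
    (∀ (x : Fin d → ℝ) (m : Fin d → ℤ),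
      f (fun i => x i + 2 * Real.pi * m i) = f x) ∧
    Summable (gevreyTermC β R f) ∧
    gevreyNormC β R f ≤ ∑' k : Fin d → ℤ, Real.exp (β * R * znormBeta β k) * ‖c k‖ := by
  obtain rfl : f = gevF c := funext hf
  have h := gevRapid_of_summable hβ hR hc
  have hnn : 0 ≤ gevreyTermC β R (gevF c) := by
    intro n
    have : 0 ≤ supNormC (gevMDerivC n (gevF c)) := Real.iSup_nonneg (fun _ => norm_nonneg _)
    simp only [Pi.zero_apply, gevreyTermC]
    positivity
  have hs : ∀ s : Finset (Fin d → ℕ), ∑ n ∈ s, gevreyTermC β R (gevF c) n ≤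
      ∑' k : Fin d → ℤ, Real.exp (β * R * znormBeta β k) * ‖c k‖ := by
    intro s
    calc ∑ n ∈ s, gevreyTermC β R (gevF c) n
        ≤ ∑ n ∈ s, ∑' k : Fin d → ℤ, gevA β R k n ^ β * ‖c k‖ := by
          refine Finset.sum_le_sum (fun n _ => ?_)
          unfold gevreyTermC
          refine (mul_le_mul_of_nonneg_left (gevMDerivC_gevF_norm n h)
            (by positivity)).trans (le_of_eq ?_)
          rw [← tsum_mul_left]
          refine tsum_congr (fun k => ?_)
          rw [gevA_rpow hβ hR]
          ring
      _ = ∑' k : Fin d → ℤ, ∑ n ∈ s, gevA β R k n ^ β * ‖c k‖ := by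
          refine (Summable.tsum_finsetSum (fun n _ => ?_)).symm
          refine ((h n).mul_left
            (R ^ (β * ∑ i, (n i : ℝ)) / (∏ i, ((n i).factorial : ℝ)) ^ β)).congr (fun k => ?_)
          rw [gevA_rpow hβ hR]
          ring
      _ ≤ _ := by
          have hle : ∀ k : Fin d → ℤ, ∑ n ∈ s, gevA β R k n ^ β * ‖c k‖ ≤
              Real.exp (β * R * znormBeta β k) * ‖c k‖ := fun k => by
            rw [← Finset.sum_mul]
            exact mul_le_mul_of_nonneg_right (gevA_rpow_sum_le hβ hR k s) (norm_nonneg _)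
          refine Summable.tsum_le_tsum hle (Summable.of_nonneg_of_le (fun k => ?_) hle hc) hc
          exact Finset.sum_nonneg (fun n _ =>
            mul_nonneg (Real.rpow_nonneg (gevA_nonneg hR k n) _) (norm_nonneg _))
  exact ⟨contDiff_infty.2 (fun m => gevF_contDiff_nat m h), gevF_periodic c,
    summable_of_sum_le hnn hs, Real.tsum_le_of_sum_le hnn hs⟩
end

section
/- (Composition lemma of Marco–Sauzin, as stated in the paper.) Let β ≥ 1, R, R₁ > 0. Let Y : ℝ^N → ℝ be smooth and (2π)ℤ^N-periodic with ‖Y‖_{β,R} < ∞, and let u = (u_1, …, u_N), where each u_i : ℝ^d → ℝ is smooth and (2π)ℤ^d-periodic with ‖u_i‖_{β,R₁} < ∞. Assume that for every i = 1, …, N one has ‖u_i‖_{β,R₁} − ‖u_i‖_{C⁰} ≤ R^β / d^{β−1}. Then the composition Y∘u, defined by (Y∘u)(x) := Y(u_1(x), …, u_N(x)), is a smooth (2π)ℤ^d-periodic function and ‖Y∘u‖_{β,R₁} ≤ ‖Y‖_{β,R}. -/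
open scoped BigOperators

/-- The partial derivative `∂_i f` of a function `f : ℝ^d → ℝ`. -/
noncomputable def gevPDeriv {d : ℕ} (i : Fin d) (f : (Fin d → ℝ) → ℝ) :
    (Fin d → ℝ) → ℝ :=
  fun x => fderiv ℝ f x (Pi.single i 1)

/-- The multi-index partial derivative `∂^k f = ∂_1^{k_1} ⋯ ∂_d^{k_d} f`. -/
noncomputable def gevMDeriv {d : ℕ} (k : Fin d → ℕ) (f : (Fin d → ℝ) → ℝ) :
    (Fin d → ℝ) → ℝ :=
  (List.finRange d).foldr (fun i g => (gevPDeriv i)^[k i] g) f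

/-- The sup-norm `‖f‖_{C⁰} = sup_x |f x|`. -/
noncomputable def supNorm {d : ℕ} (f : (Fin d → ℝ) → ℝ) : ℝ := ⨆ x, |f x|

/-- The `k`-th term `(R^{β|k|₁}/(k!)^β)‖∂^k f‖_{C⁰}` of the Gevrey norm. -/
noncomputable def gevreyTerm {d : ℕ} (β R : ℝ) (f : (Fin d → ℝ) → ℝ)
    (k : Fin d → ℕ) : ℝ :=
  R ^ (β * ∑ i, (k i : ℝ)) / (∏ i, ((k i).factorial : ℝ)) ^ β * supNorm (gevMDeriv k f)

/-- The Gevrey norm `‖f‖_{β,R} = ∑_{k∈ℕ^d} (R^{β|k|₁}/(k!)^β)‖∂^k f‖_{C⁰}`. -/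
noncomputable def gevreyNorm {d : ℕ} (β R : ℝ) (f : (Fin d → ℝ) → ℝ) : ℝ :=
  ∑' k : Fin d → ℕ, gevreyTerm β R f k

/-- `f : ℝ^d → ℝ` is `(2π)ℤ^d`-periodic. -/
def Periodic2pi {d : ℕ} (f : (Fin d → ℝ) → ℝ) : Prop :=
  ∀ (x : Fin d → ℝ) (m : Fin d → ℤ), f (fun i => x i + 2 * Real.pi * m i) = f x

open Finset

namespace GevAux

variable {d : ℕ}

lemma smooth_pderiv {f : (Fin d → ℝ) → ℝ} (hf : ContDiff ℝ (⊤ : ℕ∞) f) (i : Fin d) :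
    ContDiff ℝ (⊤ : ℕ∞) (gevPDeriv i f) := by
  unfold gevPDeriv
  exact (hf.fderiv_right (m := (⊤ : ℕ∞)) (by simp)).clm_apply contDiff_const

lemma pderiv_comm {f : (Fin d → ℝ) → ℝ} (hf : ContDiff ℝ (⊤ : ℕ∞) f) (i j : Fin d) :
    gevPDeriv i (gevPDeriv j f) = gevPDeriv j (gevPDeriv i f) := by
  have hsym : ∀ x, IsSymmSndFDerivAt ℝ f x := fun x =>
    hf.contDiffAt.isSymmSndFDerivAt (by
      simp only [minSmoothness_of_isRCLikeNormedField]; exact WithTop.coe_le_coe.2 le_top)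
  have hd : Differentiable ℝ (fderiv ℝ f) :=
    (hf.fderiv_right (m := (⊤ : ℕ∞)) (by simp)).differentiable (by simp)
  funext x
  have key : ∀ a b : Fin d, gevPDeriv a (gevPDeriv b f) x =
      fderiv ℝ (fderiv ℝ f) x (Pi.single a 1) (Pi.single b 1) := by
    intro a b
    unfold gevPDeriv
    rw [fderiv_clm_apply (hd x) (differentiableAt_const _)]
    simp
  rw [key, key]
  exact hsym x _ _

lemma smooth_iter {f : (Fin d → ℝ) → ℝ} (hf : ContDiff ℝ (⊤ : ℕ∞) f) (i : Fin d) (n : ℕ) :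
    ContDiff ℝ (⊤ : ℕ∞) ((gevPDeriv i)^[n] f) := by
  induction n with
  | zero => exact hf
  | succ n ih => rw [Function.iterate_succ_apply']; exact smooth_pderiv ih i

lemma iter_comm {f : (Fin d → ℝ) → ℝ} (hf : ContDiff ℝ (⊤ : ℕ∞) f) (i j : Fin d) (n : ℕ) :
    gevPDeriv j ((gevPDeriv i)^[n] f) = (gevPDeriv i)^[n] (gevPDeriv j f) := by
  induction n with
  | zero => rfl
  | succ n ih =>
    rw [Function.iterate_succ_apply', Function.iterate_succ_apply', ← ih,
      pderiv_comm (smooth_iter hf i n)]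

/-- Auxiliary fold over a list. -/
noncomputable def fo (l : List (Fin d)) (k : Fin d → ℕ) (f : (Fin d → ℝ) → ℝ) :
    (Fin d → ℝ) → ℝ :=
  l.foldr (fun i g => (gevPDeriv i)^[k i] g) f

lemma smooth_fo {f : (Fin d → ℝ) → ℝ} (hf : ContDiff ℝ (⊤ : ℕ∞) f) (l : List (Fin d))
    (k : Fin d → ℕ) : ContDiff ℝ (⊤ : ℕ∞) (fo l k f) := by
  induction l with
  | nil => exact hf
  | cons a l ih => exact smooth_iter ih a (k a)

lemma fo_comm {f : (Fin d → ℝ) → ℝ} (hf : ContDiff ℝ (⊤ : ℕ∞) f) (l : List (Fin d))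
    (k : Fin d → ℕ) (j : Fin d) : gevPDeriv j (fo l k f) = fo l k (gevPDeriv j f) := by
  induction l with
  | nil => rfl
  | cons a l ih =>
    change gevPDeriv j ((gevPDeriv a)^[k a] (fo l k f)) = (gevPDeriv a)^[k a] (fo l k _)
    rw [iter_comm (smooth_fo hf l k), ih]

lemma fo_congr {f : (Fin d → ℝ) → ℝ} (l : List (Fin d))
    (k k' : Fin d → ℕ) (h : ∀ i ∈ l, k i = k' i) : fo l k f = fo l k' f := by
  induction l with
  | nil => rfl
  | cons a l ih =>
    change (gevPDeriv a)^[k a] (fo l k f) = (gevPDeriv a)^[k' a] (fo l k' f)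
    rw [ih (fun i hi => h i (List.mem_cons_of_mem _ hi)), h a List.mem_cons_self]

lemma fo_succ {f : (Fin d → ℝ) → ℝ} (hf : ContDiff ℝ (⊤ : ℕ∞) f) (l : List (Fin d))
    (hl : l.Nodup) (k : Fin d → ℕ) (j : Fin d) (hj : j ∈ l) :
    fo l (k + Pi.single j 1) f = fo l k (gevPDeriv j f) := by
  induction l with
  | nil => simp at hj
  | cons a l ih =>
    change (gevPDeriv a)^[(k + Pi.single j 1 : Fin d → ℕ) a] (fo l (k + Pi.single j 1) f)
      = (gevPDeriv a)^[k a] (fo l k _)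
    rw [List.nodup_cons] at hl
    by_cases haj : j = a
    · subst haj
      rw [fo_congr l (k + Pi.single j 1) k]
      · simp only [Pi.add_apply, Pi.single_eq_same, Function.iterate_succ_apply]
        rw [fo_comm hf]
      · intro i hi
        have : i ≠ j := fun h => hl.1 (h ▸ hi)
        simp [this]
    · have hjl : j ∈ l := by
        rcases List.mem_cons.1 hj with h | h
        · exact absurd h haj
        · exact h
      rw [ih hl.2 hjl]
      have : a ≠ j := fun h => haj h.symm
      simp [this]

lemma smooth_mderiv {f : (Fin d → ℝ) → ℝ} (hf : ContDiff ℝ (⊤ : ℕ∞) f) (k : Fin d → ℕ) :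
    ContDiff ℝ (⊤ : ℕ∞) (gevMDeriv k f) := smooth_fo hf _ k

lemma mderiv_succ {f : (Fin d → ℝ) → ℝ} (hf : ContDiff ℝ (⊤ : ℕ∞) f) (k : Fin d → ℕ)
    (j : Fin d) : gevMDeriv (k + Pi.single j 1) f = gevMDeriv k (gevPDeriv j f) :=
  fo_succ hf _ (List.nodup_finRange d) k j (List.mem_finRange j)

lemma mderiv_zero (f : (Fin d → ℝ) → ℝ) : gevMDeriv (0 : Fin d → ℕ) f = f := by
  unfold gevMDeriv
  induction List.finRange d with
  | nil => rfl
  | cons a l ih => simp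

lemma pderiv_add {f g : (Fin d → ℝ) → ℝ} (hf : ContDiff ℝ (⊤ : ℕ∞) f)
    (hg : ContDiff ℝ (⊤ : ℕ∞) g) (i : Fin d) :
    gevPDeriv i (f + g) = gevPDeriv i f + gevPDeriv i g := by
  funext x
  simp only [gevPDeriv, Pi.add_apply]
  rw [fderiv_add (hf.differentiable (by simp) x) (hg.differentiable (by simp) x)]
  rfl

lemma pderiv_mul {f g : (Fin d → ℝ) → ℝ} (hf : ContDiff ℝ (⊤ : ℕ∞) f)
    (hg : ContDiff ℝ (⊤ : ℕ∞) g) (i : Fin d) :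
    gevPDeriv i (f * g) = gevPDeriv i f * g + f * gevPDeriv i g := by
  funext x
  simp only [gevPDeriv, Pi.add_apply, Pi.mul_apply]
  rw [fderiv_mul (hf.differentiable (by simp) x) (hg.differentiable (by simp) x)]
  simp
  ring

lemma pderiv_comp {N : ℕ} {Y : (Fin N → ℝ) → ℝ} (hY : ContDiff ℝ (⊤ : ℕ∞) Y)
    {u : Fin N → (Fin d → ℝ) → ℝ} (hu : ∀ i, ContDiff ℝ (⊤ : ℕ∞) (u i)) (i : Fin d) :
    gevPDeriv i (fun x => Y (fun j => u j x)) =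
      ∑ j, (fun x => gevPDeriv j Y (fun j => u j x)) * gevPDeriv i (u j) := by
  funext x
  have h1 : HasFDerivAt (fun x => (fun j => u j x))
      (ContinuousLinearMap.pi fun j => fderiv ℝ (u j) x) x :=
    hasFDerivAt_pi.2 fun j => ((hu j).differentiable (by simp) x).hasFDerivAt
  have h2 := (hY.differentiable (by simp) (fun j => u j x)).hasFDerivAt
  have h3 : HasFDerivAt (fun x => Y (fun j => u j x)) _ x := h2.comp x h1
  simp only [gevPDeriv, Finset.sum_apply, Pi.mul_apply]
  rw [h3.fderiv]
  simp only [ContinuousLinearMap.comp_apply]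
  have h4 := LinearMap.pi_apply_eq_sum_univ (fderiv ℝ Y fun j => u j x).toLinearMap
    ((ContinuousLinearMap.pi fun j => fderiv ℝ (u j) x) (Pi.single i 1))
  refine h4.trans (Finset.sum_congr rfl fun j _ => ?_)
  rw [smul_eq_mul, mul_comm]
  have h5 : (fun k => if j = k then (1 : ℝ) else 0) = Pi.single j 1 := by
    funext k
    simp [Pi.single_apply, eq_comm]
  rw [h5]
  rfl

/-- Taylor series of `f` at `x`. -/
noncomputable def T (x : Fin d → ℝ) (f : (Fin d → ℝ) → ℝ) : MvPowerSeries (Fin d) ℝ :=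
  fun n => gevMDeriv n f x / ∏ i, ((n i).factorial : ℝ)

lemma coeff_T (x : Fin d → ℝ) (f : (Fin d → ℝ) → ℝ) (n : Fin d →₀ ℕ) :
    MvPowerSeries.coeff n (T x f) = gevMDeriv n f x / ∏ i, ((n i).factorial : ℝ) := rfl

lemma fact_succ (n : Fin d →₀ ℕ) (i : Fin d) :
    (∏ j, (((n + Finsupp.single i 1 : Fin d →₀ ℕ) j).factorial : ℝ)) =
      (n i + 1) * ∏ j, ((n j).factorial : ℝ) := by
  rw [← Finset.mul_prod_erase _ _ (mem_univ i),
    ← Finset.mul_prod_erase _ (fun j => ((n j).factorial : ℝ)) (mem_univ i), ← mul_assoc]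
  congr 1
  · simp [Nat.factorial_succ]
  · refine Finset.prod_congr rfl fun j hj => ?_
    have := Finset.ne_of_mem_erase hj
    simp [this.symm]

lemma pderiv_T (x : Fin d → ℝ) {f : (Fin d → ℝ) → ℝ} (hf : ContDiff ℝ (⊤ : ℕ∞) f) (i : Fin d) :
    MvPowerSeries.pderiv ℝ i (T x f) = T x (gevPDeriv i f) := by
  ext n
  rw [MvPowerSeries.coeff_pderiv, coeff_T, coeff_T, fact_succ, ← mderiv_succ hf]
  have : (⇑(n + Finsupp.single i 1 : Fin d →₀ ℕ) : Fin d → ℕ) = ⇑n + Pi.single i 1 := by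
    rw [Finsupp.coe_add, Finsupp.single_eq_pi_single]
  rw [this]
  have h1 : ((n i : ℝ) + 1) ≠ 0 := by positivity
  have h2 : (∏ j, ((n j).factorial : ℝ)) ≠ 0 := by positivity
  field_simp

lemma coeff_zero_T (x : Fin d → ℝ) (f : (Fin d → ℝ) → ℝ) :
    MvPowerSeries.coeff 0 (T x f) = f x := by
  rw [coeff_T]
  simp [mderiv_zero]

/-- induction principle: coefficients agree up to degree `M`. -/
lemma coeff_succ_eq {F G : MvPowerSeries (Fin d) ℝ} (n : Fin d →₀ ℕ) (i : Fin d)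
    (h : MvPowerSeries.coeff n (MvPowerSeries.pderiv ℝ i F) =
      MvPowerSeries.coeff n (MvPowerSeries.pderiv ℝ i G)) :
    MvPowerSeries.coeff (n + Finsupp.single i 1) F =
      MvPowerSeries.coeff (n + Finsupp.single i 1) G := by
  rw [MvPowerSeries.coeff_pderiv, MvPowerSeries.coeff_pderiv] at h
  have h1 : ((n i : ℝ) + 1) ≠ 0 := by positivity
  exact mul_right_cancel₀ h1 h

lemma exists_succ (n : Fin d →₀ ℕ) {M : ℕ} (h : n.degree = M + 1) :
    ∃ (n' : Fin d →₀ ℕ) (i : Fin d), n = n' + Finsupp.single i 1 ∧ n'.degree = M := by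
  have hne : n ≠ 0 := by rintro rfl; simp at h
  obtain ⟨i, hi⟩ := Finsupp.ne_iff.1 hne
  have hle : Finsupp.single i 1 ≤ n := by
    rw [Finsupp.single_le_iff]
    exact Nat.one_le_iff_ne_zero.2 hi
  have heq : n = (n - Finsupp.single i 1) + Finsupp.single i 1 := (tsub_add_cancel_of_le hle).symm
  refine ⟨n - Finsupp.single i 1, i, heq, ?_⟩
  rw [heq, map_add, Finsupp.degree_single] at h
  omega

lemma coeff_zero_mul' (F G : MvPowerSeries (Fin d) ℝ) :
    MvPowerSeries.coeff 0 (F * G) = MvPowerSeries.coeff 0 F * MvPowerSeries.coeff 0 G := by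
  simp

lemma T_add (x : Fin d → ℝ) {f g : (Fin d → ℝ) → ℝ} (hf : ContDiff ℝ (⊤ : ℕ∞) f)
    (hg : ContDiff ℝ (⊤ : ℕ∞) g) : T x (f + g) = T x f + T x g := by
  suffices H : ∀ M : ℕ, ∀ f g : (Fin d → ℝ) → ℝ, ContDiff ℝ (⊤ : ℕ∞) f → ContDiff ℝ (⊤ : ℕ∞) g →
      ∀ n : Fin d →₀ ℕ, n.degree = M → MvPowerSeries.coeff n (T x (f + g)) =
        MvPowerSeries.coeff n (T x f + T x g) by
    ext n; exact H _ f g hf hg n rfl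
  clear hf hg f g
  intro M
  induction M with
  | zero =>
    intro f g hf hg n hn
    rw [Finsupp.degree_eq_zero_iff] at hn
    subst hn
    rw [map_add, coeff_zero_T, coeff_zero_T, coeff_zero_T]; rfl
  | succ M ih =>
    intro f g hf hg n hn
    obtain ⟨n', i, rfl, hn'⟩ := exists_succ n hn
    apply coeff_succ_eq
    rw [pderiv_T (f := f + g) x (hf.add hg), map_add, pderiv_T x hf, pderiv_T x hg, pderiv_add hf hg]
    exact ih _ _ (smooth_pderiv hf i) (smooth_pderiv hg i) n' hn'

lemma T_mul (x : Fin d → ℝ) {f g : (Fin d → ℝ) → ℝ} (hf : ContDiff ℝ (⊤ : ℕ∞) f)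
    (hg : ContDiff ℝ (⊤ : ℕ∞) g) : T x (f * g) = T x f * T x g := by
  suffices H : ∀ M : ℕ, ∀ f g : (Fin d → ℝ) → ℝ, ContDiff ℝ (⊤ : ℕ∞) f → ContDiff ℝ (⊤ : ℕ∞) g →
      ∀ n : Fin d →₀ ℕ, n.degree = M → MvPowerSeries.coeff n (T x (f * g)) =
        MvPowerSeries.coeff n (T x f * T x g) by
    ext n; exact H _ f g hf hg n rfl
  clear hf hg f g
  intro M
  induction M with
  | zero =>
    intro f g hf hg n hn
    rw [Finsupp.degree_eq_zero_iff] at hn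
    subst hn
    rw [coeff_zero_T, coeff_zero_mul', coeff_zero_T, coeff_zero_T]; rfl
  | succ M ih =>
    intro f g hf hg n hn
    obtain ⟨n', i, rfl, hn'⟩ := exists_succ n hn
    apply coeff_succ_eq
    rw [pderiv_T (f := f * g) x (hf.mul hg), Derivation.leibniz, pderiv_T x hf, pderiv_T x hg,
      pderiv_mul hf hg, T_add (f := gevPDeriv i f * g) (g := f * gevPDeriv i g) x ((smooth_pderiv hf i).mul hg) (hf.mul (smooth_pderiv hg i)),
      map_add, map_add, ih _ _ (smooth_pderiv hf i) hg n' hn',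
      ih _ _ hf (smooth_pderiv hg i) n' hn', smul_eq_mul, smul_eq_mul, add_comm,
      mul_comm (T x g)]

lemma T_sum (x : Fin d → ℝ) {ι : Type*} (s : Finset ι) (f : ι → (Fin d → ℝ) → ℝ)
    (hf : ∀ j, ContDiff ℝ (⊤ : ℕ∞) (f j)) : T x (∑ j ∈ s, f j) = ∑ j ∈ s, T x (f j) := by
  classical
  have hz : T x (0 : (Fin d → ℝ) → ℝ) = 0 := by
    have := T_add x (f := 0) (g := 0) contDiff_const contDiff_const
    simpa using this
  induction s using Finset.induction_on with
  | empty => simpa using hz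
  | insert a s ha ih =>
    rw [Finset.sum_insert ha, Finset.sum_insert ha, ← ih, T_add x (hf a)]
    have : (∑ j ∈ s, f j) = fun x => ∑ j ∈ s, f j x := by funext y; simp
    rw [this]
    exact ContDiff.sum fun j _ => hf j

/-- Taylor polynomial with total degree at most `M`. -/
noncomputable def P {N : ℕ} (M : ℕ) (y : Fin N → ℝ) (Y : (Fin N → ℝ) → ℝ) :
    MvPolynomial (Fin N) ℝ :=
  ∑ m ∈ (Finset.Iic (Finsupp.equivFunOnFinite.symm fun _ => M)).filter (fun m => m.degree ≤ M),
    MvPolynomial.monomial m (MvPowerSeries.coeff m (T y Y))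

lemma coeff_P {N : ℕ} (M : ℕ) (y : Fin N → ℝ) (Y : (Fin N → ℝ) → ℝ) (m : Fin N →₀ ℕ) :
    MvPolynomial.coeff m (P M y Y) = if m.degree ≤ M then MvPowerSeries.coeff m (T y Y) else 0 := by
  unfold P
  rw [MvPolynomial.coeff_sum]
  simp only [MvPolynomial.coeff_monomial]
  rw [Finset.sum_ite_eq']
  have : m.degree ≤ M → m ≤ (Finsupp.equivFunOnFinite.symm fun _ => M) := by
    intro h i
    exact (Finsupp.le_degree i m).trans h
  simp only [Finset.mem_filter, Finset.mem_Iic]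
  by_cases h : m.degree ≤ M
  · simp [h, this h]
  · simp [h]

lemma pderiv_P {N : ℕ} (M : ℕ) (y : Fin N → ℝ) {Y : (Fin N → ℝ) → ℝ}
    (hY : ContDiff ℝ (⊤ : ℕ∞) Y) (j : Fin N) :
    MvPolynomial.pderiv j (P (M + 1) y Y) = P M y (gevPDeriv j Y) := by
  ext m
  rw [MvPolynomial.coeff_pderiv, coeff_P, coeff_P, ← pderiv_T y hY, MvPowerSeries.coeff_pderiv,
    map_add, Finsupp.degree_single]
  simp

lemma chain_aeval {N : ℕ} (D : Derivation ℝ (MvPowerSeries (Fin d) ℝ) (MvPowerSeries (Fin d) ℝ))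
    (F : Fin N → MvPowerSeries (Fin d) ℝ) (p : MvPolynomial (Fin N) ℝ) :
    D (MvPolynomial.aeval F p) =
      ∑ j, MvPolynomial.aeval F (MvPolynomial.pderiv j p) * D (F j) := by
  induction p using MvPolynomial.induction_on with
  | C a => simp
  | add p q hp hq => simp [hp, hq, add_mul, Finset.sum_add_distrib]
  | mul_X p k hp =>
    simp only [map_mul, MvPolynomial.aeval_X, Derivation.leibniz, smul_eq_mul, hp, map_add,
      add_mul, Finset.sum_add_distrib, Finset.mul_sum]
    congr 1
    · rw [Finset.sum_eq_single k]
      · simp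
      · intro b _ hb
        rw [MvPolynomial.pderiv_X_of_ne hb.symm]; simp
      · simp
    · exact Finset.sum_congr rfl fun j _ => by ring

/-- The Faà di Bruno formula at the level of Taylor coefficients. -/
lemma coeff_T_comp {N : ℕ} {u : Fin N → (Fin d → ℝ) → ℝ} (hu : ∀ i, ContDiff ℝ (⊤ : ℕ∞) (u i))
    (x : Fin d → ℝ) (n : Fin d →₀ ℕ) : ∀ (M : ℕ) (_ : n.degree ≤ M)
    (Y : (Fin N → ℝ) → ℝ) (_ : ContDiff ℝ (⊤ : ℕ∞) Y),
    MvPowerSeries.coeff n (T x (fun x => Y (fun i => u i x))) =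
      MvPowerSeries.coeff n (MvPolynomial.aeval (fun i => T x (u i) - MvPowerSeries.C (u i x))
        (P M (fun i => u i x) Y)) := by
  suffices H : ∀ K : ℕ, ∀ n : Fin d →₀ ℕ, n.degree ≤ K → ∀ (M : ℕ) (_ : n.degree ≤ M)
    (Y : (Fin N → ℝ) → ℝ) (_ : ContDiff ℝ (⊤ : ℕ∞) Y),
    MvPowerSeries.coeff n (T x (fun x => Y (fun i => u i x))) =
      MvPowerSeries.coeff n (MvPolynomial.aeval (fun i => T x (u i) - MvPowerSeries.C (u i x))
        (P M (fun i => u i x) Y)) from H _ n le_rfl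
  clear n
  have zero_case : ∀ (M : ℕ)
    (Y : (Fin N → ℝ) → ℝ) (_ : ContDiff ℝ (⊤ : ℕ∞) Y),
    MvPowerSeries.coeff 0 (T x (fun x => Y (fun i => u i x))) =
      MvPowerSeries.coeff 0 (MvPolynomial.aeval (fun i => T x (u i) - MvPowerSeries.C (u i x))
        (P M (fun i => u i x) Y)) := by
    intro M Y hY
    have hc : ∀ p : MvPolynomial (Fin N) ℝ, MvPowerSeries.coeff 0
        (MvPolynomial.aeval (fun i => T x (u i) - MvPowerSeries.C (u i x)) p) =
        MvPolynomial.coeff 0 p := by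
      intro p
      induction p using MvPolynomial.induction_on with
      | C a =>
        rw [MvPolynomial.aeval_C, MvPolynomial.coeff_zero_C]
        exact MvPowerSeries.coeff_zero_C a
      | add p q hp hq => rw [map_add, map_add, hp, hq, MvPolynomial.coeff_add]
      | mul_X p k hp =>
        rw [map_mul, coeff_zero_mul', MvPolynomial.aeval_X, map_sub, coeff_zero_T,
          MvPowerSeries.coeff_zero_C, sub_self, mul_zero, MvPolynomial.coeff_mul_X']
        rw [if_neg (by simp)]
    rw [hc, coeff_P, coeff_zero_T, coeff_zero_T]
    simp
  intro K
  induction K with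
  | zero =>
    intro n hn M _ Y hY
    obtain rfl : n = 0 := (Finsupp.degree_eq_zero_iff n).1 (Nat.le_zero.1 hn)
    exact zero_case M Y hY
  | succ K ih =>
    intro n hn M hM Y hY
    rcases Nat.eq_zero_or_pos n.degree with h0 | hpos
    · obtain rfl : n = 0 := (Finsupp.degree_eq_zero_iff n).1 h0
      exact zero_case M Y hY
    obtain ⟨K', hK'⟩ : ∃ K', n.degree = K' + 1 := ⟨n.degree - 1, by omega⟩
    obtain ⟨M', rfl⟩ : ∃ M', M = M' + 1 := ⟨M - 1, by omega⟩
    obtain ⟨n', i, rfl, hn'⟩ := exists_succ n hK'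
    apply coeff_succ_eq
    have hYu : ∀ Z : (Fin N → ℝ) → ℝ, ContDiff ℝ (⊤ : ℕ∞) Z →
        ContDiff ℝ (⊤ : ℕ∞) (fun x => Z (fun i => u i x)) := fun Z hZ =>
      hZ.comp (contDiff_pi.2 hu)
    rw [pderiv_T x (hYu Y hY), chain_aeval, pderiv_comp hY hu, T_sum]
    swap
    · intro j; exact (hYu _ (smooth_pderiv hY j)).mul (smooth_pderiv (hu j) i)
    rw [map_sum, map_sum]
    refine Finset.sum_congr rfl fun j _ => ?_
    rw [T_mul x (hYu _ (smooth_pderiv hY j)) (smooth_pderiv (hu j) i), pderiv_P M' _ hY, map_sub,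
      pderiv_T x (hu j)]
    have hC : MvPowerSeries.pderiv ℝ i (MvPowerSeries.C (u j x)) = 0 := by
      simp
    rw [hC, sub_zero, MvPowerSeries.coeff_mul, MvPowerSeries.coeff_mul]
    refine Finset.sum_congr rfl fun p hp => ?_
    have hp' : p.1.degree ≤ K' := by
      have := Finset.HasAntidiagonal.mem_antidiagonal.1 hp
      rw [← hn', ← this, map_add]; omega
    rw [ih p.1 (by omega) M' (by omega) _ (smooth_pderiv hY j)]


/-! Periodicity and boundedness. -/

lemma per_pderiv {f : (Fin d → ℝ) → ℝ} (hf : Periodic2pi f) (i : Fin d) :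
    Periodic2pi (gevPDeriv i f) := by
  intro x m
  have h : (fun y => f (y + fun i => 2 * Real.pi * m i)) = f := by
    funext y; exact hf y m
  have h2 := fderiv_comp_add_right (𝕜 := ℝ) (f := f) (x := x) (fun i => 2 * Real.pi * m i)
  rw [h] at h2
  unfold gevPDeriv
  rw [h2]
  rfl

lemma per_mderiv {f : (Fin d → ℝ) → ℝ} (hf : Periodic2pi f) (k : Fin d → ℕ) :
    Periodic2pi (gevMDeriv k f) := by
  unfold gevMDeriv
  induction List.finRange d with
  | nil => exact hf
  | cons a l ih =>
    simp only [List.foldr_cons]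
    induction k a with
    | zero => exact ih
    | succ n ihn => rw [Function.iterate_succ_apply']; exact per_pderiv ihn a

lemma bdd_of_per {f : (Fin d → ℝ) → ℝ} (hf : Periodic2pi f) (hc : Continuous f) :
    BddAbove (Set.range fun x => |f x|) := by
  have hK : IsCompact (Set.Icc (0 : Fin d → ℝ) (fun _ => 2 * Real.pi)) := isCompact_Icc
  obtain ⟨C, hC⟩ := hK.bddAbove_image (f := fun x => |f x|) (by fun_prop)
  refine ⟨C, ?_⟩
  rintro _ ⟨x, rfl⟩
  have h2 : (0 : ℝ) < 2 * Real.pi := by positivity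
  have hx := hf x (fun i => - ⌊x i / (2 * Real.pi)⌋)
  simp only
  rw [← hx]
  refine hC ⟨_, ⟨?_, ?_⟩, rfl⟩
  · intro i
    have := Int.floor_le (x i / (2 * Real.pi))
    rw [le_div_iff₀ h2] at this
    simp only [Pi.zero_apply, Int.cast_neg]
    linarith
  · intro i
    have := (Int.lt_floor_add_one (x i / (2 * Real.pi))).le
    rw [div_le_iff₀ h2] at this
    simp only [Int.cast_neg]
    linarith

lemma abs_le_sup {f : (Fin d → ℝ) → ℝ} (hs : ContDiff ℝ (⊤ : ℕ∞) f) (hf : Periodic2pi f)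
    (k : Fin d → ℕ) (x : Fin d → ℝ) : |gevMDeriv k f x| ≤ supNorm (gevMDeriv k f) :=
  le_ciSup (f := fun x => |gevMDeriv k f x|)
    (bdd_of_per (per_mderiv hf k) (smooth_mderiv hs k).continuous) x

lemma sup_nonneg (f : (Fin d → ℝ) → ℝ) : 0 ≤ supNorm f :=
  Real.iSup_nonneg fun _ => abs_nonneg _

/-! Combinatorial inequality. -/

lemma fact_step (A a : ℕ) (ha : 1 ≤ a) :
    (A + 1) * (A.factorial * a.factorial) ≤ (A + a).factorial := by
  have h1 : A + 1 ≤ (A + a).choose A := by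
    calc A + 1 = (A + 1).choose A := by simp
      _ ≤ (A + a).choose A := Nat.choose_le_choose A (by omega)
  calc (A + 1) * (A.factorial * a.factorial)
      ≤ (A + a).choose A * (A.factorial * a.factorial) := Nat.mul_le_mul_right _ h1
    _ = (A + a).factorial := by
        rw [← mul_assoc, Nat.choose_symm_add]
        exact Nat.add_choose_mul_factorial_mul_factorial A a

lemma fact_one {ι : Type*} (t : Finset ι) (q : ι → Prop) [DecidablePred q]
    (a : ι → ℕ) (hq : ∀ p, q p → 1 ≤ a p) :
    (t.filter q).card.factorial * ∏ p ∈ t, (a p).factorial ≤ (∑ p ∈ t, a p).factorial ∧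
      (t.filter q).card ≤ ∑ p ∈ t, a p := by
  classical
  induction t using Finset.induction_on with
  | empty => simp
  | insert b t hb ih =>
    obtain ⟨ih1, ih2⟩ := ih
    rw [Finset.prod_insert hb, Finset.sum_insert hb, Finset.filter_insert]
    by_cases h : q b
    · rw [if_pos h, Finset.card_insert_of_notMem (by simp [hb])]
      have hb1 := hq b h
      refine ⟨?_, by omega⟩
      rw [Nat.factorial_succ, add_comm (a b)]
      calc ((t.filter q).card + 1) * (t.filter q).card.factorial *
            ((a b).factorial * ∏ p ∈ t, (a p).factorial)
          = ((t.filter q).card + 1) * (((t.filter q).card.factorial *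
              ∏ p ∈ t, (a p).factorial) * (a b).factorial) := by ring
        _ ≤ ((∑ p ∈ t, a p) + 1) * ((∑ p ∈ t, a p).factorial * (a b).factorial) := by gcongr
        _ ≤ _ := fact_step _ _ hb1
    · rw [if_neg h]
      refine ⟨?_, by omega⟩
      calc (t.filter q).card.factorial * ((a b).factorial * ∏ p ∈ t, (a p).factorial)
          = (a b).factorial * ((t.filter q).card.factorial * ∏ p ∈ t, (a p).factorial) := by ring
        _ ≤ (a b).factorial * (∑ p ∈ t, a p).factorial := by gcongr
        _ ≤ _ := Nat.le_of_dvd (Nat.factorial_pos _)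
            (Nat.factorial_mul_factorial_dvd_factorial_add _ _)

lemma multinomial_bound (r : Fin d → ℕ) :
    (∑ c, r c).factorial ≤ d ^ (∑ c, r c) * ∏ c, (r c).factorial := by
  have h := Finset.sum_pow_eq_sum_piAntidiag (univ : Finset (Fin d)) (fun _ => (1 : ℕ)) (∑ c, r c)
  simp only [Finset.sum_const, Finset.card_univ, Fintype.card_fin, smul_eq_mul, mul_one, one_pow,
    Finset.prod_const_one, Nat.cast_id] at h
  rw [← Nat.multinomial_spec, mul_comm]
  refine Nat.mul_le_mul_right _ ?_
  rw [h]
  exact Finset.single_le_sum (f := fun k => Nat.multinomial univ k) (fun _ _ => Nat.zero_le _)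
    (by simp)

lemma fact_ineq {ι : Type*} [Fintype ι] (l : ι → Fin d →₀ ℕ) (h : ∀ p, l p ≠ 0) :
    (Fintype.card ι).factorial * ∏ p, ∏ i, (l p i).factorial ≤
      d ^ (Fintype.card ι) * ∏ i, ((∑ p, l p) i).factorial := by
  classical
  have h' : ∀ p, ∃ i, l p i ≠ 0 := fun p => by simpa using Finsupp.ne_iff.1 (h p)
  choose c hc using h'
  have hcard : Fintype.card ι = ∑ i : Fin d, (univ.filter (fun p => c p = i)).card := by
    rw [← Finset.card_univ]
    exact Finset.card_eq_sum_card_fiberwise (fun _ _ => by simp)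
  rw [Finset.prod_comm]
  have h1 := multinomial_bound (fun i : Fin d => (univ.filter (fun p => c p = i)).card)
  rw [← hcard] at h1
  calc _ ≤ (d ^ (Fintype.card ι) * ∏ i, ((univ.filter (fun p => c p = i)).card).factorial) *
        ∏ i, ∏ p, (l p i).factorial := Nat.mul_le_mul_right _ h1
    _ = d ^ (Fintype.card ι) * ∏ i, (((univ.filter (fun p => c p = i)).card).factorial *
        ∏ p, (l p i).factorial) := by rw [Finset.prod_mul_distrib, mul_assoc]
    _ ≤ _ := by
      refine Nat.mul_le_mul_left _ (Finset.prod_le_prod' fun i _ => ?_)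
      rw [Finsupp.finsetSum_apply]
      exact (fact_one univ (fun p => c p = i) (fun p => l p i)
        (fun p hp => by have := hc p; rw [hp] at this; omega)).1

/-! The main estimate. -/

/-- index set of truncated multi-indices -/
noncomputable def S (N M : ℕ) : Finset (Fin N →₀ ℕ) :=
  (Finset.Iic (Finsupp.equivFunOnFinite.symm fun _ => M)).filter (fun m => m.degree ≤ M)

lemma coeff_aeval_P {N : ℕ} (M : ℕ) (y : Fin N → ℝ) (Y : (Fin N → ℝ) → ℝ)
    (F : Fin N → MvPowerSeries (Fin d) ℝ) (n : Fin d →₀ ℕ) :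
    MvPowerSeries.coeff n (MvPolynomial.aeval F (P M y Y)) =
      ∑ m ∈ S N M, MvPowerSeries.coeff m (T y Y) *
        ∑ l ∈ finsuppAntidiag (univ : Finset (Σ i, Fin (m i))) n,
          ∏ p, MvPowerSeries.coeff (l p) (F p.1) := by
  unfold P
  rw [map_sum, map_sum]
  refine Finset.sum_congr rfl fun m _ => ?_
  rw [MvPolynomial.aeval_monomial, ← Algebra.smul_def, map_smul, smul_eq_mul,
    ← MvPowerSeries.coeff_prod]
  congr 2
  rw [Fintype.prod_sigma, Finsupp.prod_fintype _ _ (by simp)]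
  simp

/-- weight of nonconstant part -/
noncomputable def A (β R₁ : ℝ) (f : (Fin d → ℝ) → ℝ) (k : Fin d →₀ ℕ) : ℝ :=
  if k = 0 then 0 else gevreyTerm β R₁ f k

lemma term_nonneg {β R : ℝ} (hR : 0 < R) (f : (Fin d → ℝ) → ℝ) (k : Fin d → ℕ) :
    0 ≤ gevreyTerm β R f k := by
  unfold gevreyTerm
  have := sup_nonneg (gevMDeriv k f)
  positivity

lemma A_nonneg {β R : ℝ} (hR : 0 < R) (f : (Fin d → ℝ) → ℝ) (k : Fin d →₀ ℕ) :
    0 ≤ A β R f k := by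
  unfold A
  split_ifs
  · exact le_rfl
  · exact term_nonneg hR f k

lemma weight_ineq (β R₁ : ℝ) (hβ : 1 ≤ β) (hR₁ : 0 < R₁) {N : ℕ} {m : Fin N →₀ ℕ}
    (l : (Σ i, Fin (m i)) → Fin d →₀ ℕ) (hl : ∀ p, l p ≠ 0) (V : (Σ i, Fin (m i)) → ℝ)
    (hV : ∀ p, 0 ≤ V p) (n : Fin d →₀ ℕ) (hn : ∑ p, l p = n) :
    R₁ ^ (β * ∑ i, (n i : ℝ)) / (∏ i, ((n i).factorial : ℝ)) ^ β * (∏ i, ((n i).factorial : ℝ)) *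
      ∏ p, (V p / ∏ i, ((l p i).factorial : ℝ)) ≤
    ((d : ℝ) ^ (β - 1)) ^ m.degree / (∏ i, ((m i).factorial : ℝ)) ^ (β - 1) *
      ∏ p, (R₁ ^ (β * ∑ i, (l p i : ℝ)) / (∏ i, ((l p i).factorial : ℝ)) ^ β * V p) := by
  have hcard : Fintype.card (Σ i, Fin (m i)) = m.degree := by
    simp [Finsupp.degree_eq_sum]
  have hF := fact_ineq l hl
  rw [hcard, hn] at hF
  have hm : ∏ i, (m i).factorial ≤ (m.degree).factorial := by
    rw [Finsupp.degree_eq_sum]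
    exact Nat.le_of_dvd (Nat.factorial_pos _) (Nat.prod_factorial_dvd_factorial_sum _ _)
  set a : ℝ := ∏ i, ((n i).factorial : ℝ) with ha
  set b : ℝ := ∏ i, ((m i).factorial : ℝ) with hb
  have ha0 : 0 < a := by positivity
  have hb0 : 0 < b := by positivity
  set c : (Σ i, Fin (m i)) → ℝ := fun p => ∏ i, ((l p i).factorial : ℝ) with hc
  have hc0 : ∀ p, 0 < c p := fun p => by simp only [hc]; positivity
  have hF2 : b * ∏ p, c p ≤ (d : ℝ) ^ m.degree * a := by
    have : (∏ i, (m i).factorial) * ∏ p, ∏ i, (l p i).factorial ≤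
        d ^ m.degree * ∏ i, (n i).factorial := (Nat.mul_le_mul_right _ hm).trans hF
    have h2 : (((∏ i, (m i).factorial) * ∏ p, ∏ i, (l p i).factorial : ℕ) : ℝ) ≤
        ((d ^ m.degree * ∏ i, (n i).factorial : ℕ) : ℝ) := by exact_mod_cast this
    push_cast at h2
    exact h2
  have hpc : 0 < ∏ p, c p := Finset.prod_pos fun p _ => hc0 p
  have hF3 : b ^ (β - 1) * (∏ p, c p) ^ (β - 1) ≤ ((d : ℝ) ^ (β - 1)) ^ m.degree * a ^ (β - 1) := by
    have h3 := Real.rpow_le_rpow (by positivity) hF2 (by linarith : 0 ≤ β - 1)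
    rw [Real.mul_rpow hb0.le hpc.le, Real.mul_rpow (by positivity) ha0.le, ← Real.rpow_natCast,
      ← Real.rpow_mul (by positivity), mul_comm (m.degree : ℝ), Real.rpow_mul (by positivity),
      Real.rpow_natCast] at h3
    exact h3
  have hRn : R₁ ^ (β * ∑ i, (n i : ℝ)) = ∏ p, R₁ ^ (β * ∑ i, (l p i : ℝ)) := by
    rw [← Real.rpow_sum_of_pos hR₁, ← Finset.mul_sum, Finset.sum_comm]
    congr 2
    refine Finset.sum_congr rfl fun i _ => ?_
    rw [← hn, Finsupp.finsetSum_apply]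
    push_cast; rfl
  have hprod1 : ∏ p, (V p / c p) = (∏ p, V p) / ∏ p, c p := Finset.prod_div_distrib _ _
  have hprod2 : ∏ p, (R₁ ^ (β * ∑ i, (l p i : ℝ)) / c p ^ β * V p) =
      R₁ ^ (β * ∑ i, (n i : ℝ)) / ((∏ p, c p) ^ (β - 1) * ∏ p, c p) * ∏ p, V p := by
    rw [Finset.prod_mul_distrib, Finset.prod_div_distrib, ← hRn,
      Real.finsetProd_rpow _ _ (fun p _ => (hc0 p).le)]
    congr 2
    rw [← Real.rpow_add_one hpc.ne']; congr 1; ring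
  rw [hprod1, hprod2]
  have hab : a ^ β = a ^ (β - 1) * a := by
    rw [← Real.rpow_add_one ha0.ne']; congr 1; ring
  rw [hab]
  have hV0 : 0 ≤ ∏ p, V p := Finset.prod_nonneg fun p _ => hV p
  have hRp : 0 < R₁ ^ (β * ∑ i, (n i : ℝ)) := by positivity
  have hA : 0 < a ^ (β - 1) := by positivity
  have hB : 0 < b ^ (β - 1) := by positivity
  have hCp : 0 < (∏ p, c p) ^ (β - 1) := by positivity
  generalize R₁ ^ (β * ∑ i, (n i : ℝ)) = r at *
  generalize a ^ (β - 1) = A' at *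
  generalize b ^ (β - 1) = B' at *
  generalize (∏ p, c p) ^ (β - 1) = C' at *
  generalize ((d : ℝ) ^ (β - 1)) ^ m.degree = D' at *
  generalize (∏ p, c p) = c' at *
  generalize (∏ p, V p) = v at *
  have e1 : r / (A' * a) * a * (v / c') = (r * v / c') * (1 / A') := by field_simp
  have e2 : D' / B' * (r / (C' * c') * v) = (r * v / c') * (D' / (B' * C')) := by field_simp
  rw [e1, e2]
  refine mul_le_mul_of_nonneg_left ?_ (by positivity)
  rw [div_le_div_iff₀ hA (by positivity)]
  linarith

set_option maxHeartbeats 2000000 in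
lemma term_bound (β R₁ : ℝ) (hβ : 1 ≤ β) (hR₁ : 0 < R₁) {N : ℕ}
    {Y : (Fin N → ℝ) → ℝ} (hY : ContDiff ℝ (⊤ : ℕ∞) Y) (hYper : Periodic2pi Y)
    {u : Fin N → (Fin d → ℝ) → ℝ}
    (hu : ∀ i, ContDiff ℝ (⊤ : ℕ∞) (u i)) (huper : ∀ i, Periodic2pi (u i))
    (n : Fin d →₀ ℕ) (M : ℕ) (hM : n.degree ≤ M) :
    gevreyTerm β R₁ (fun x : Fin d → ℝ => Y (fun i => u i x)) n ≤
      ∑ m ∈ S N M, (supNorm (gevMDeriv m Y) / (∏ i, ((m i).factorial : ℝ)) ^ β *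
        ((d : ℝ) ^ (β - 1)) ^ m.degree) *
        ∑ l ∈ finsuppAntidiag (univ : Finset (Σ i, Fin (m i))) n,
          ∏ p, A β R₁ (u p.1) (l p) := by
  classical
  set w : ℝ := R₁ ^ (β * ∑ i, (n i : ℝ)) / (∏ i, ((n i).factorial : ℝ)) ^ β with hw
  have hw0 : 0 < w := by positivity
  have hn0 : 0 < ∏ i, ((n i).factorial : ℝ) := by positivity
  have main : ∀ x, w * |gevMDeriv n (fun x : Fin d → ℝ => Y (fun i => u i x)) x| ≤
      ∑ m ∈ S N M, (supNorm (gevMDeriv m Y) / (∏ i, ((m i).factorial : ℝ)) ^ β *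
        ((d : ℝ) ^ (β - 1)) ^ m.degree) *
        ∑ l ∈ finsuppAntidiag (univ : Finset (Σ i, Fin (m i))) n,
          ∏ p, A β R₁ (u p.1) (l p) := by
    intro x
    have h1 := coeff_T_comp hu x n M hM Y hY
    rw [coeff_aeval_P, coeff_T, div_eq_iff hn0.ne'] at h1
    rw [h1, abs_mul, abs_of_pos hn0, mul_comm |_|, ← mul_assoc]
    refine (mul_le_mul_of_nonneg_left (Finset.abs_sum_le_sum_abs _ _) (by positivity)).trans ?_
    rw [Finset.mul_sum]
    refine Finset.sum_le_sum fun m _ => ?_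
    rw [abs_mul]
    have hb0 : 0 < ∏ i, ((m i).factorial : ℝ) := by positivity
    have hT : |MvPowerSeries.coeff m (T (fun i => u i x) Y)| ≤
        supNorm (gevMDeriv m Y) / ∏ i, ((m i).factorial : ℝ) := by
      rw [coeff_T, abs_div, abs_of_pos hb0]
      gcongr
      exact abs_le_sup hY hYper _ _
    have hsum : w * (∏ i, ((n i).factorial : ℝ)) *
        |∑ l ∈ finsuppAntidiag (univ : Finset (Σ i, Fin (m i))) n,
          ∏ p, MvPowerSeries.coeff (l p) (T x (u p.1) - MvPowerSeries.C (u p.1 x))| ≤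
        ((d : ℝ) ^ (β - 1)) ^ m.degree / (∏ i, ((m i).factorial : ℝ)) ^ (β - 1) *
        ∑ l ∈ finsuppAntidiag (univ : Finset (Σ i, Fin (m i))) n,
          ∏ p, A β R₁ (u p.1) (l p) := by
      refine (mul_le_mul_of_nonneg_left (Finset.abs_sum_le_sum_abs _ _) (by positivity)).trans ?_
      rw [Finset.mul_sum, Finset.mul_sum]
      refine Finset.sum_le_sum fun l hl => ?_
      rw [Finset.mem_finsuppAntidiag] at hl
      rw [Finset.abs_prod]
      by_cases hz : ∀ p, l p ≠ 0
      · have hco : ∀ p : (Σ i, Fin (m i)),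
            |MvPowerSeries.coeff (l p) (T x (u p.1) - MvPowerSeries.C (u p.1 x))| ≤
            supNorm (gevMDeriv (l p) (u p.1)) / ∏ i, ((l p i).factorial : ℝ) := by
          intro p
          have hp0 : 0 < ∏ i, ((l p i).factorial : ℝ) := by positivity
          rw [map_sub, MvPowerSeries.coeff_C, if_neg (hz p), sub_zero, coeff_T, abs_div,
            abs_of_pos hp0]
          gcongr
          exact abs_le_sup (hu _) (huper _) _ _
        refine (mul_le_mul_of_nonneg_left (Finset.prod_le_prod (fun p _ => abs_nonneg _)
          (fun p _ => hco p)) (by positivity)).trans ?_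
        refine (weight_ineq β R₁ hβ hR₁ l hz _ (fun p => sup_nonneg _) n hl.1).trans
          (le_of_eq ?_)
        congr 1
        refine Finset.prod_congr rfl fun p _ => ?_
        rw [A, if_neg (hz p)]; rfl
      · push Not at hz
        obtain ⟨p, hp⟩ := hz
        have z1 : ∏ p : (Σ i, Fin (m i)),
            |MvPowerSeries.coeff (l p) (T x (u p.1) - MvPowerSeries.C (u p.1 x))| = 0 := by
          refine Finset.prod_eq_zero (mem_univ p) ?_
          rw [hp, map_sub, coeff_zero_T, MvPowerSeries.coeff_zero_C, sub_self, abs_zero]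
        rw [z1, mul_zero]
        have := Finset.prod_nonneg (s := univ) (f := fun p : (Σ i, Fin (m i)) =>
          A β R₁ (u p.1) (l p)) (fun p _ => A_nonneg hR₁ _ _)
        positivity
    have hnn : 0 ≤ ∑ l ∈ finsuppAntidiag (univ : Finset (Σ i, Fin (m i))) n,
          ∏ p, A β R₁ (u p.1) (l p) :=
      Finset.sum_nonneg fun l _ => Finset.prod_nonneg fun p _ => A_nonneg hR₁ _ _
    have hsn := sup_nonneg (gevMDeriv m Y)
    calc _ = |MvPowerSeries.coeff m (T (fun i => u i x) Y)| * (w * (∏ i, ((n i).factorial : ℝ)) *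
        |∑ l ∈ finsuppAntidiag (univ : Finset (Σ i, Fin (m i))) n,
          ∏ p, MvPowerSeries.coeff (l p) (T x (u p.1) - MvPowerSeries.C (u p.1 x))|) := by ring
      _ ≤ (supNorm (gevMDeriv m Y) / ∏ i, ((m i).factorial : ℝ)) *
          (((d : ℝ) ^ (β - 1)) ^ m.degree / (∏ i, ((m i).factorial : ℝ)) ^ (β - 1) *
        ∑ l ∈ finsuppAntidiag (univ : Finset (Σ i, Fin (m i))) n,
          ∏ p, A β R₁ (u p.1) (l p)) :=
          mul_le_mul hT hsum (by positivity) (by positivity)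
      _ = _ := by
        have hbb : (∏ i, ((m i).factorial : ℝ)) ^ β =
            (∏ i, ((m i).factorial : ℝ)) ^ (β - 1) * ∏ i, ((m i).factorial : ℝ) := by
          rw [← Real.rpow_add_one hb0.ne']; congr 1; ring
        rw [hbb]
        have : 0 < (∏ i, ((m i).factorial : ℝ)) ^ (β - 1) := by positivity
        field_simp
  unfold gevreyTerm supNorm
  rw [Real.mul_iSup_of_nonneg hw0.le]
  exact ciSup_le main

lemma sum_A (β R₁ : ℝ) (hR₁ : 0 < R₁) {f : (Fin d → ℝ) → ℝ}
    (hs : Summable (gevreyTerm β R₁ f)) (K : Fin d →₀ ℕ) :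
    ∑ k ∈ Finset.Iic K, A β R₁ f k ≤ gevreyNorm β R₁ f - supNorm f := by
  classical
  have hs' : Summable (fun k : Fin d →₀ ℕ => gevreyTerm β R₁ f k) :=
    (Finsupp.equivFunOnFinite (α := Fin d) (M := ℕ) |>.summable_iff
      (f := gevreyTerm β R₁ f)).2 hs
  have ht : ∑' k : Fin d →₀ ℕ, gevreyTerm β R₁ f k = gevreyNorm β R₁ f :=
    (Finsupp.equivFunOnFinite (α := Fin d) (M := ℕ)).tsum_eq (gevreyTerm β R₁ f)
  have h0 : gevreyTerm β R₁ f ((0 : Fin d →₀ ℕ) : Fin d → ℕ) = supNorm f := by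
    simp [gevreyTerm, mderiv_zero]
  have h1 := hs'.sum_le_tsum (Finset.Iic K) (fun k _ => term_nonneg hR₁ f k)
  rw [ht, ← Finset.add_sum_erase _ _ (Finset.mem_Iic.2 (zero_le : (0 : Fin d →₀ ℕ) ≤ K)), h0] at h1
  rw [← Finset.add_sum_erase _ _ (Finset.mem_Iic.2 (zero_le : (0 : Fin d →₀ ℕ) ≤ K))]
  have h2 : ∑ k ∈ (Finset.Iic K).erase 0, A β R₁ f k =
      ∑ k ∈ (Finset.Iic K).erase 0, gevreyTerm β R₁ f k :=
    Finset.sum_congr rfl fun k hk => by rw [A, if_neg (Finset.ne_of_mem_erase hk)]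
  rw [h2]
  have h3 : A β R₁ f 0 = 0 := by simp [A]
  linarith

lemma sum_prod_A (β R₁ : ℝ) (hR₁ : 0 < R₁) {ι : Type*} [Fintype ι] [DecidableEq ι]
    (v : ι → (Fin d → ℝ) → ℝ) (K : Fin d →₀ ℕ) :
    ∑ n ∈ Finset.Iic K, ∑ l ∈ finsuppAntidiag (univ : Finset ι) n, ∏ p, A β R₁ (v p) (l p) ≤
      ∏ p, ∑ k ∈ Finset.Iic K, A β R₁ (v p) k := by
  classical
  rw [Finset.prod_univ_sum, ← Finset.sum_biUnion]
  · have hinj : Function.Injective (fun l : ι →₀ (Fin d →₀ ℕ) => (l : ι → Fin d →₀ ℕ)) :=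
      DFunLike.coe_injective
    rw [← Finset.sum_image (s := (Finset.Iic K).biUnion fun n => finsuppAntidiag (univ : Finset ι) n)
      (g := fun l : ι →₀ (Fin d →₀ ℕ) => (l : ι → Fin d →₀ ℕ))
      (f := fun l : ι → Fin d →₀ ℕ => ∏ p, A β R₁ (v p) (l p)) hinj.injOn]
    refine Finset.sum_le_sum_of_subset_of_nonneg ?_ ?_
    · intro l hl
      rw [Finset.mem_image] at hl
      obtain ⟨l', hl', rfl⟩ := hl
      rw [Finset.mem_biUnion] at hl'
      obtain ⟨n, hn, hl'⟩ := hl'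
      rw [Finset.mem_finsuppAntidiag] at hl'
      rw [Fintype.mem_piFinset]
      intro p
      rw [Finset.mem_Iic] at hn ⊢
      refine le_trans ?_ hn
      rw [← hl'.1]
      exact Finset.single_le_sum (f := fun p => l' p) (fun _ _ => zero_le) (mem_univ p)
    · intro l _ _
      exact Finset.prod_nonneg fun p _ => A_nonneg hR₁ _ _
  · intro a _ b _ hab
    rw [Function.onFun, Finset.disjoint_left]
    intro l h1 h2
    rw [Finset.mem_finsuppAntidiag] at h1 h2
    exact hab (h1.1.symm.trans h2.1)

set_option maxHeartbeats 2000000 in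
lemma box_bound (β R R₁ : ℝ) (hβ : 1 ≤ β) (hR : 0 < R)
    (hR₁ : 0 < R₁) {N : ℕ} (hd : 1 ≤ d)
    {Y : (Fin N → ℝ) → ℝ} (hY : ContDiff ℝ (⊤ : ℕ∞) Y) (hYper : Periodic2pi Y)
    (hYsum : Summable (gevreyTerm β R Y))
    {u : Fin N → (Fin d → ℝ) → ℝ}
    (hu : ∀ i, ContDiff ℝ (⊤ : ℕ∞) (u i)) (huper : ∀ i, Periodic2pi (u i))
    (husum : ∀ i, Summable (gevreyTerm β R₁ (u i)))
    (hsmall : ∀ i, gevreyNorm β R₁ (u i) - supNorm (u i) ≤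
      R ^ β / (d : ℝ) ^ (β - 1)) (K : Fin d →₀ ℕ) :
    ∑ n ∈ Finset.Iic K, gevreyTerm β R₁ (fun x : Fin d → ℝ => Y (fun i => u i x)) n ≤
      gevreyNorm β R Y := by
  classical
  have hd0 : (0 : ℝ) < d := by exact_mod_cast hd
  have hs' : Summable (fun k : Fin N →₀ ℕ => gevreyTerm β R Y k) :=
    (Finsupp.equivFunOnFinite (α := Fin N) (M := ℕ) |>.summable_iff
      (f := gevreyTerm β R Y)).2 hYsum
  have ht : ∑' k : Fin N →₀ ℕ, gevreyTerm β R Y k = gevreyNorm β R Y :=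
    (Finsupp.equivFunOnFinite (α := Fin N) (M := ℕ)).tsum_eq (gevreyTerm β R Y)
  calc _ ≤ ∑ n ∈ Finset.Iic K,
      ∑ m ∈ S N K.degree, (supNorm (gevMDeriv m Y) / (∏ i, ((m i).factorial : ℝ)) ^ β *
        ((d : ℝ) ^ (β - 1)) ^ m.degree) *
        ∑ l ∈ finsuppAntidiag (univ : Finset (Σ i, Fin (m i))) n,
          ∏ p, A β R₁ (u p.1) (l p) := by
        refine Finset.sum_le_sum fun n hn => term_bound β R₁ hβ hR₁ hY hYper hu huper n _ ?_
        exact Finsupp.degree_mono (Finset.mem_Iic.1 hn)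
    _ = ∑ m ∈ S N K.degree, (supNorm (gevMDeriv m Y) / (∏ i, ((m i).factorial : ℝ)) ^ β *
        ((d : ℝ) ^ (β - 1)) ^ m.degree) * ∑ n ∈ Finset.Iic K,
        ∑ l ∈ finsuppAntidiag (univ : Finset (Σ i, Fin (m i))) n,
          ∏ p, A β R₁ (u p.1) (l p) := by
        rw [Finset.sum_comm]
        simp only [Finset.mul_sum]
    _ ≤ ∑ m ∈ S N K.degree, gevreyTerm β R Y m := by
        refine Finset.sum_le_sum fun m _ => ?_
        have hsn := sup_nonneg (gevMDeriv m Y)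
        have hb0 : 0 < (∏ i, ((m i).factorial : ℝ)) ^ β := by positivity
        have h1 : ∏ p : (Σ i, Fin (m i)), ∑ k ∈ Finset.Iic K, A β R₁ (u p.1) k ≤
            (R ^ β / (d : ℝ) ^ (β - 1)) ^ m.degree := by
          refine (Finset.prod_le_prod (fun p _ => Finset.sum_nonneg fun k _ => A_nonneg hR₁ _ _)
            (fun p _ => (sum_A β R₁ hR₁ (husum p.1) K).trans (hsmall p.1))).trans ?_
          rw [Finset.prod_const, Finset.card_univ]
          simp [Finsupp.degree_eq_sum]
        have h2 := (sum_prod_A β R₁ hR₁ (fun p : (Σ i, Fin (m i)) => u p.1) K).trans h1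
        refine (mul_le_mul_of_nonneg_left h2 (by positivity)).trans (le_of_eq ?_)
        unfold gevreyTerm
        have h3 : R ^ (β * ∑ i, (m i : ℝ)) = (R ^ β) ^ m.degree := by
          rw [Real.rpow_mul hR.le, ← Real.rpow_natCast, Finsupp.degree_eq_sum]
          push_cast; rfl
        rw [h3, div_pow]
        have hdp : 0 < ((d : ℝ) ^ (β - 1)) ^ m.degree := by positivity
        field_simp
    _ ≤ _ := by
        rw [← ht]
        exact hs'.sum_le_tsum _ (fun k _ => term_nonneg hR Y k)

end GevAux

/-- Composition lemma of Marco–Sauzin: if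
`‖u_i‖_{β,R₁} - ‖u_i‖_{C⁰} ≤ R^β/d^{β-1}` for each `i`, then
`Y∘u` is smooth, `(2π)ℤ^d`-periodic and `‖Y∘u‖_{β,R₁} ≤ ‖Y‖_{β,R}`. -/
theorem gevrey_composition (β R R₁ : ℝ) (hβ : 1 ≤ β) (hR : 0 < R)
    (hR₁ : 0 < R₁) (N d : ℕ) (hN : 1 ≤ N) (hd : 1 ≤ d)
    (Y : (Fin N → ℝ) → ℝ) (hY : ContDiff ℝ (⊤ : ℕ∞) Y) (hYper : Periodic2pi Y)
    (hYsum : Summable (gevreyTerm β R Y))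
    (u : Fin N → (Fin d → ℝ) → ℝ)
    (hu : ∀ i, ContDiff ℝ (⊤ : ℕ∞) (u i)) (huper : ∀ i, Periodic2pi (u i))
    (husum : ∀ i, Summable (gevreyTerm β R₁ (u i)))
    (hsmall : ∀ i, gevreyNorm β R₁ (u i) - supNorm (u i) ≤
      R ^ β / (d : ℝ) ^ (β - 1)) :
    ContDiff ℝ (⊤ : ℕ∞) (fun x : Fin d → ℝ => Y (fun i => u i x)) ∧
    Periodic2pi (fun x : Fin d → ℝ => Y (fun i => u i x)) ∧
    Summable (gevreyTerm β R₁ (fun x : Fin d → ℝ => Y (fun i => u i x))) ∧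
    gevreyNorm β R₁ (fun x : Fin d → ℝ => Y (fun i => u i x)) ≤
      gevreyNorm β R Y := by
  classical
  have hbox := GevAux.box_bound β R R₁ hβ hR hR₁ hd hY hYper hYsum hu huper husum hsmall
  set G : (Fin d → ℝ) → ℝ := fun x : Fin d → ℝ => Y (fun i => u i x) with hG
  have hfin : ∀ s : Finset (Fin d →₀ ℕ), ∑ n ∈ s, gevreyTerm β R₁ G n ≤ gevreyNorm β R Y := by
    intro s
    refine le_trans ?_ (hbox (s.sup id))
    refine Finset.sum_le_sum_of_subset_of_nonneg ?_ (fun k _ _ => GevAux.term_nonneg hR₁ G k)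
    intro n hn
    exact Finset.mem_Iic.2 (Finset.le_sup (f := id) hn)
  have hs' : Summable (fun k : Fin d →₀ ℕ => gevreyTerm β R₁ G k) :=
    summable_of_sum_le (fun k => GevAux.term_nonneg hR₁ G k) hfin
  have hs : Summable (gevreyTerm β R₁ G) :=
    (Finsupp.equivFunOnFinite (α := Fin d) (M := ℕ) |>.summable_iff
      (f := gevreyTerm β R₁ G)).1 hs'
  have ht : ∑' k : Fin d →₀ ℕ, gevreyTerm β R₁ G k = gevreyNorm β R₁ G :=
    (Finsupp.equivFunOnFinite (α := Fin d) (M := ℕ)).tsum_eq (gevreyTerm β R₁ G)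
  refine ⟨hY.comp (contDiff_pi.2 hu), ?_, hs, ?_⟩
  · intro x m
    simp only [hG]
    congr 1
    funext i
    exact huper i x m
  · rw [← ht]
    exact hs'.tsum_le_of_sum_le hfin
end
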